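/- Let K be a number field, let α_1,…,α_k ∈ Z_K be pairwise distinct nonzero algebraic integers, and let a_1,…,a_k ∈ K, not all zero, so that x_n = a_1 α_1^n + … + a_k α_k^n for n ≥ 0 is a linear recurrence sequence in K. Then for any a, b ∈ Z_K with b ≠ 0, there exists a non-Archimedean place v' of K such that the v'-adically convergent sum Σ_{n≥0} n! x_n ≠ a/b in K_{v'}. -/

import Mathlib

open NumberField IsDedekindDomain Nat Finset

section Algebra
open Polynomial

/-- The shift operator on sequences. -/
def seqShift (R : Type*) [CommRing R] : Module.End R (ℕ → R) where
  toFun u := fun n => u (n + 1)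
  map_add' _ _ := rfl
  map_smul' _ _ := rfl

/-- The derivative operator on sequences (coefficients of power series). -/
def seqDer (R : Type*) [CommRing R] : Module.End R (ℕ → R) where
  toFun u := fun n => ((n : R) + 1) * u (n + 1)
  map_add' u v := by funext n; simp [mul_add]
  map_smul' c u := by funext n; simp; ring

variable {R : Type*} [CommRing R]

lemma seqShift_apply (u : ℕ → R) (n : ℕ) : seqShift R u n = u (n + 1) := rfl
lemma seqDer_apply (u : ℕ → R) (n : ℕ) : seqDer R u n = ((n : R) + 1) * u (n + 1) := rfl

lemma seqShift_pow_apply (u : ℕ → R) (i n : ℕ) : (seqShift R ^ i) u n = u (n + i) := by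
  induction i generalizing n with
  | zero => rfl
  | succ i ih => rw [_root_.pow_succ', Module.End.mul_apply, seqShift_apply, ih]; congr 1; ring

lemma aeval_shift_apply (f : R[X]) (u : ℕ → R) (n : ℕ) :
    aeval (seqShift R) f u n = ∑ i ∈ range (f.natDegree + 1), f.coeff i * u (n + i) := by
  rw [aeval_eq_sum_range]
  simp [LinearMap.sum_apply, Finset.sum_apply, seqShift_pow_apply]

lemma shift_mul_der : seqShift R * seqDer R = seqDer R * seqShift R + seqShift R ^ 2 := by
  apply LinearMap.ext; intro u; funext n
  simp [Module.End.mul_apply, seqShift_apply, seqDer_apply, pow_two]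
  ring

lemma aeval_mul_der (P : R[X]) :
    aeval (seqShift R) P * seqDer R =
      seqDer R * aeval (seqShift R) P + aeval (seqShift R) (X ^ 2 * derivative P) := by
  induction P using Polynomial.induction_on' with
  | add p q hp hq => simp only [map_add, add_mul, mul_add, hp, hq]; abel
  | monomial n c =>
    induction n with
    | zero =>
      simp only [monomial_zero_left, aeval_C, derivative_C, mul_zero, map_zero, add_zero]
      exact Algebra.commutes c _
    | succ n ih =>
      have h : (monomial (n + 1) c : R[X]) = monomial n c * X := by simp [monomial_mul_X]
      rw [h, derivative_mul, derivative_X, mul_one, map_mul, aeval_X, mul_assoc, shift_mul_der,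
        mul_add, ← mul_assoc, ih, mul_add (X ^ 2 : R[X]), map_add]
      have h1 : aeval (seqShift R) (X ^ 2 * (derivative (monomial n c) * X)) =
        aeval (seqShift R) (X ^ 2 * derivative (monomial n c)) * seqShift R := by
        rw [← mul_assoc, map_mul, aeval_X]
      have h2 : aeval (seqShift R) (X ^ 2 * (monomial n c : R[X])) =
        aeval (seqShift R) (monomial n c : R[X]) * seqShift R ^ 2 := by
        rw [mul_comm, map_mul, map_pow, aeval_X]
      rw [h1, h2, add_mul, mul_assoc, add_assoc]

lemma aeval_der_apply (P : R[X]) (u : ℕ → R) :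
    aeval (seqShift R) P (seqDer R u) =
      seqDer R (aeval (seqShift R) P u) + aeval (seqShift R) (X ^ 2 * derivative P) u := by
  have := congrArg (fun F => F u) (aeval_mul_der P)
  simpa using this

lemma kill_mul {f : R[X]} (h : R[X]) {u : ℕ → R} (hu : aeval (seqShift R) f u = 0) :
    aeval (seqShift R) (h * f) u = 0 := by
  rw [map_mul, Module.End.mul_apply, hu, map_zero]

lemma kill_der (g : R[X]) (j : ℕ) (u : ℕ → R) (hu : aeval (seqShift R) (g ^ j) u = 0) :
    aeval (seqShift R) (g ^ (j + 1)) (seqDer R u) = 0 := by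
  rw [aeval_der_apply, _root_.pow_succ', kill_mul g hu, map_zero, zero_add, ← _root_.pow_succ', derivative_pow]
  have : (X ^ 2 * (C ((j + 1 : ℕ) : R) * g ^ (j + 1 - 1) * derivative g) : R[X])
    = (X ^ 2 * C ((j + 1 : ℕ) : R) * derivative g) * g ^ j := by
    rw [Nat.add_sub_cancel]; ring
  rw [this]; exact kill_mul _ hu

lemma kill_der_pow (g : R[X]) (x : ℕ → R) (hx : aeval (seqShift R) g x = 0) (j : ℕ) :
    aeval (seqShift R) (g ^ (j + 1)) ((seqDer R ^ j) x) = 0 := by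
  induction j with
  | zero => simpa using hx
  | succ j ih => rw [_root_.pow_succ' (seqDer R), Module.End.mul_apply]; exact kill_der g _ _ ih

lemma iterate_eq (x y : ℕ → R) (hy : y = x + seqDer R y) (m : ℕ) :
    y = ∑ j ∈ range m, (seqDer R ^ j) x + (seqDer R ^ m) y := by
  induction m with
  | zero => simp
  | succ m ih =>
    conv_lhs => rw [ih]
    conv_lhs => rw [hy]
    rw [sum_range_succ, map_add, _root_.pow_succ, Module.End.mul_apply, add_assoc]

lemma der_pow_apply (u : ℕ → R) (m n : ℕ) :
    (seqDer R ^ m) u n = ((n + 1).ascFactorial m : R) * u (n + m) := by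
  induction m generalizing n with
  | zero => simp
  | succ m ih =>
    rw [_root_.pow_succ', Module.End.mul_apply, seqDer_apply, ih, ← mul_assoc,
      show n + (m + 1) = n + 1 + m by ring]
    congr 1
    have := Nat.succ_ascFactorial (n + 1) m
    rw [Nat.ascFactorial_succ, ← this]; push_cast; ring

lemma main_dvd (g : R[X]) (x y : ℕ → R) (hy : y = x + seqDer R y)
    (hx : aeval (seqShift R) g x = 0) (m n : ℕ) :
    ((m ! : ℕ) : R) ∣ aeval (seqShift R) (g ^ m) y n := by
  have h : aeval (seqShift R) (g ^ m) y = aeval (seqShift R) (g ^ m) ((seqDer R ^ m) y) := by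
    conv_lhs => rw [iterate_eq x y hy m]
    rw [map_add, map_sum, Finset.sum_eq_zero, zero_add]
    intro j hj
    have : m = (m - (j + 1)) + (j + 1) := by have := Finset.mem_range.1 hj; omega
    rw [this, pow_add]
    exact kill_mul _ (kill_der_pow g x hx j)
  rw [h, aeval_shift_apply]
  refine Finset.dvd_sum fun i _ => Dvd.dvd.mul_left ?_ _
  rw [der_pow_apply]
  exact Dvd.dvd.mul_right (by exact_mod_cast Nat.cast_dvd_cast (Nat.factorial_dvd_ascFactorial _ _)) _

/-- If the first values vanish for all large powers, everything vanishes. -/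
lemma all_zero (g : R[X]) (hg : g.Monic) (hk : 0 < g.natDegree) (y : ℕ → R) (m0 : ℕ)
    (h : ∀ m, m0 ≤ m → ∀ n < g.natDegree, aeval (seqShift R) (g ^ m) y n = 0) (n : ℕ) :
    ∀ m, m0 ≤ m → aeval (seqShift R) (g ^ m) y n = 0 := by
  induction n using Nat.strong_induction_on with
  | _ n ih =>
    intro m hm
    by_cases hn : n < g.natDegree
    · exact h m hm n hn
    have h1 := ih (n - g.natDegree) (by omega) (m + 1) (by omega)
    rw [_root_.pow_succ', map_mul, Module.End.mul_apply, aeval_shift_apply, sum_range_succ,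
      Finset.sum_eq_zero, hg.coeff_natDegree, zero_add, one_mul, Nat.sub_add_cancel (by omega)] at h1
    · exact h1
    · intro i hi
      rw [ih _ (by have := Finset.mem_range.1 hi; omega) m hm, mul_zero]

lemma aeval_shift_map {S : Type*} [CommRing S] (f0 : R →+* S) (f : R[X]) (hf : f.Monic) [Nontrivial S]
    (u : ℕ → R) (n : ℕ) :
    aeval (seqShift S) (f.map f0) (fun i => f0 (u i)) n = f0 (aeval (seqShift R) f u n) := by
  rw [aeval_shift_apply, aeval_shift_apply, hf.natDegree_map]
  simp

end Algebra

lemma endgame {F : Type*} [Field F] [CharZero F] (g : Polynomial F)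
    (hg : IsCoprime g (Polynomial.X ^ 2 * Polynomial.derivative g))
    (x y : ℕ → F) (hy : y = x + seqDer F y) (hx : Polynomial.aeval (seqShift F) g x = 0)
    (m : ℕ) (hm : Polynomial.aeval (seqShift F) (g ^ m) y = 0) : y = 0 := by
  induction m with
  | zero => simpa using hm
  | succ m ih =>
    apply ih
    have h1 : Polynomial.aeval (seqShift F) (g ^ (m + 1)) (seqDer F y) = 0 := by
      have h2 : seqDer F y = y - x := by
        conv_rhs => rw [hy]
        rw [add_sub_cancel_left]
      rw [h2, map_sub, hm, _root_.pow_succ, kill_mul _ hx, sub_zero]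
    rw [aeval_der_apply, hm, map_zero, zero_add, Polynomial.derivative_pow] at h1
    have h3 : Polynomial.aeval (seqShift F)
        ((Polynomial.X ^ 2 * Polynomial.derivative g) * g ^ m) y = 0 := by
      have e : ((Polynomial.X ^ 2 * Polynomial.derivative g) * g ^ m) =
        Polynomial.C (((m + 1 : ℕ) : F)⁻¹) * (Polynomial.X ^ 2 *
          (Polynomial.C ((m + 1 : ℕ) : F) * g ^ (m + 1 - 1) * Polynomial.derivative g)) := by
        have : Polynomial.C (((m + 1 : ℕ) : F)⁻¹) * Polynomial.C ((m + 1 : ℕ) : F) = 1 := by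
          rw [← Polynomial.C_mul, inv_mul_cancel₀ (by exact_mod_cast Nat.succ_ne_zero m),
            Polynomial.C_1]
        rw [Nat.add_sub_cancel]
        linear_combination (-(Polynomial.X ^ 2 * Polynomial.derivative g * g ^ m)) * this
      rw [e]; exact kill_mul _ h1
    obtain ⟨p, q, hpq⟩ := hg
    have e : g ^ m = p * g ^ (m + 1) + q * ((Polynomial.X ^ 2 * Polynomial.derivative g) * g ^ m) := by
      linear_combination (-(g ^ m)) * hpq
    rw [e, map_add, LinearMap.add_apply, kill_mul _ hm, kill_mul _ h3, add_zero]
section Adic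
variable {K : Type*} [Field K] [NumberField K]

lemma pow_dvd_fact (q j : ℕ) (hq : 0 < q) : q ^ j ∣ (q * j)! := by
  induction j with
  | zero => simp
  | succ j ih =>
    have h : q * (j + 1) ≠ 0 := by positivity
    rw [← Nat.mul_factorial_pred h, _root_.pow_succ']
    refine Nat.mul_dvd_mul (Dvd.intro _ rfl) (ih.trans (Nat.factorial_dvd_factorial ?_))
    have : q * (j + 1) = q * j + q := by ring
    omega

lemma adic_int_mem (v : HeightOneSpectrum (𝓞 K)) (r : 𝓞 K) :
    Valued.v (algebraMap K (v.adicCompletion K) (r : K)) ≤ 1 := by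
  have := v.valuedAdicCompletion_eq_valuation' (r : K)
  exact this.le.trans (v.valuation_le_one r)

lemma exists_small (v : HeightOneSpectrum (𝓞 K)) :
    ∃ q : ℕ, 0 < q ∧ Valued.v ((q : ℕ) : v.adicCompletion K) < 1 := by
  refine ⟨Ideal.absNorm v.asIdeal, ?_, ?_⟩
  · exact Nat.pos_of_ne_zero (Ideal.absNorm_ne_zero_iff_mem_nonZeroDivisors.2
      (mem_nonZeroDivisors_of_ne_zero v.ne_bot))
  · have h1 := (v.valuation_lt_one_iff_mem (K := K) ((Ideal.absNorm v.asIdeal : ℕ) : 𝓞 K)).2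
      (Ideal.absNorm_mem _)
    have h2 := v.valuedAdicCompletion_eq_valuation' (((Ideal.absNorm v.asIdeal : ℕ) : 𝓞 K) : K)
    rw [← h2] at h1
    have h3 : ((((Ideal.absNorm v.asIdeal : ℕ) : 𝓞 K) : K) : v.adicCompletion K) =
      algebraMap K (v.adicCompletion K) (((Ideal.absNorm v.asIdeal : ℕ) : 𝓞 K) : K) := rfl
    rw [h3] at h1
    simpa using h1

lemma adic_summable (v : HeightOneSpectrum (𝓞 K)) (x : ℕ → 𝓞 K) :
    Summable (fun n : ℕ => ((n ! : ℕ) : v.adicCompletion K) *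
      algebraMap K (v.adicCompletion K) (x n : K)) := by
  have : NonarchimedeanRing (v.adicCompletion K) :=
    { is_nonarchimedean := by
        intro U hU
        obtain ⟨γ, hγ⟩ := Valued.mem_nhds_zero.1 hU
        exact ⟨⟨Valued.v.restrict.ltAddSubgroup γ, Valued.isOpen_ball _ _⟩, hγ⟩ }
  apply NonarchimedeanAddGroup.summable_of_tendsto_cofinite_zero
  rw [Nat.cofinite_eq_atTop]
  obtain ⟨q, hq, hv⟩ := exists_small v
  have h1 := Valued.tendsto_zero_pow_of_v_lt_one hv
  have h2 : Filter.Tendsto (fun n => n / q) Filter.atTop Filter.atTop :=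
    Nat.tendsto_div_const_atTop hq.ne'
  have h3 := h1.comp h2
  rw [(Valued.hasBasis_nhds_zero (v.adicCompletion K) _).tendsto_right_iff] at h3 ⊢
  intro γ hγ
  filter_upwards [h3 γ hγ] with n hn
  refine lt_of_le_of_lt ?_ hn
  obtain ⟨c, hc⟩ : q ^ (n / q) ∣ n ! :=
    (pow_dvd_fact q (n / q) hq).trans (Nat.factorial_dvd_factorial (Nat.mul_div_le n q))
  have e : ((n ! : ℕ) : v.adicCompletion K) * algebraMap K (v.adicCompletion K) (x n : K) =
    (q : v.adicCompletion K) ^ (n / q) *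
      algebraMap K (v.adicCompletion K) (((c : 𝓞 K) * x n : 𝓞 K) : K) := by
    rw [hc]; push_cast; ring
  simp only [Function.comp]
  rw [e, map_mul]
  apply mul_le_of_le_one_right'
  rw [Valuation.restrict_le_one_iff]
  exact adic_int_mem v _

lemma adic_integral (v : HeightOneSpectrum (𝓞 K)) (x : ℕ → 𝓞 K) (Y : K)
    (h : (∑' n : ℕ, ((n ! : ℕ) : v.adicCompletion K) *
      algebraMap K (v.adicCompletion K) (x n : K)) = algebraMap K (v.adicCompletion K) Y) (N : ℕ) :
    v.valuation K ((Y - ∑ n ∈ range N, (n ! : K) * (x n : K)) / (N ! : K)) ≤ 1 := by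
  have hs := adic_summable v x
  rw [← hs.sum_add_tsum_nat_add N] at h
  have hN : (N ! : v.adicCompletion K) ≠ 0 := by
    have : algebraMap K (v.adicCompletion K) (N ! : K) ≠ 0 := by
      rw [Ne, map_eq_zero]; exact_mod_cast Nat.factorial_ne_zero N
    simpa using this
  have e : ∀ n, (((n + N) ! : ℕ) : v.adicCompletion K) *
      algebraMap K (v.adicCompletion K) (x (n + N) : K) = (N ! : v.adicCompletion K) *
      algebraMap K (v.adicCompletion K) ((((N + 1).ascFactorial n : 𝓞 K) * x (n + N) : 𝓞 K) : K) := by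
    intro n
    rw [add_comm n N, ← Nat.factorial_mul_ascFactorial N n]; push_cast; ring
  simp only [e] at h
  rw [tsum_mul_left] at h
  set T := ∑' n, algebraMap K (v.adicCompletion K)
    ((((N + 1).ascFactorial n : 𝓞 K) * x (n + N) : 𝓞 K) : K) with hT
  have hTm : T ∈ v.adicCompletionIntegers K := by
    refine tsum_mem (Valued.isClosed_valuationSubring _) fun n => ?_
    exact adic_int_mem v _
  have h4 : algebraMap K (v.adicCompletion K)
      ((Y - ∑ n ∈ range N, (n ! : K) * (x n : K)) / (N ! : K)) = T := by
    rw [map_div₀, map_sub, ← h, map_sum]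
    simp only [map_mul, map_natCast]
    field_simp
    ring
  rw [← v.valuedAdicCompletion_eq_valuation']
  rw [← h4] at hTm
  exact hTm

end Adic

section Arch
variable {K : Type*} [Field K] [NumberField K]

lemma house_bound_y (x y : ℕ → K) (hy : ∀ n : ℕ, ((n : K) + 1) * y (n + 1) = y n - x n)
    (C c : ℝ) (hC : 0 ≤ C) (hc : 0 ≤ c) (hx : ∀ n, house (x n) ≤ C * c ^ n) :
    ∃ C' c' : ℝ, 0 ≤ C' ∧ 1 ≤ c' ∧ ∀ n, house (y n) ≤ C' * c' ^ n := by
  refine ⟨C + house (y 0), c + 2, add_nonneg hC (house_nonneg _), by linarith, fun n => ?_⟩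
  induction n with
  | zero => simpa using hC
  | succ n ih =>
    have h1 : house ((n : K) + 1) * 1 = (n : ℝ) + 1 := by
      have := house_nat_mul (K := K) 1 (n + 1)
      have h2 := house_intCast (K := K) 1
      simp at h2
      rw [h2] at this
      simpa using this
    have h2 := house_nat_mul (y (n + 1)) (n + 1)
    push_cast at h2
    rw [hy] at h2
    have h3 : house (y n - x n) ≤ house (y n) + house (x n) := by
      have := house_add_le (y n) (((-1 : ℤ) : K) * x n)
      have h5 := house_mul_le (((-1 : ℤ) : K)) (x n)
      rw [house_intCast] at h5
      simp at h5 this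
      rw [sub_eq_add_neg]; linarith
    have h4 : house (y (n + 1)) ≤ house (y n - x n) := by
      rw [h2]; nlinarith [house_nonneg (y (n + 1)), (Nat.cast_nonneg n : (0 : ℝ) ≤ n)]
    have h5 : c ^ n ≤ (c + 2) ^ n := pow_le_pow_left₀ hc (by linarith) n
    have h6 : C * c ^ n ≤ (C + house (y 0)) * (c + 2) ^ n := by
      have := house_nonneg (y 0)
      gcongr; linarith
    have h7 : 0 ≤ (C + house (y 0)) * (c + 2) ^ n := by
      have := house_nonneg (y 0); positivity
    calc house (y (n + 1)) ≤ 2 * ((C + house (y 0)) * (c + 2) ^ n) := by linarith [hx n]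
      _ ≤ (c + 2) * ((C + house (y 0)) * (c + 2) ^ n) := by gcongr; linarith
      _ = _ := by ring

lemma house_bound_x {k : ℕ} (α : Fin k → K) (a : Fin k → K) :
    ∃ C c : ℝ, 0 ≤ C ∧ 0 ≤ c ∧ ∀ n : ℕ, house (∑ i, a i * α i ^ n) ≤ C * c ^ n := by
  refine ⟨∑ i, house (a i), ∑ i, house (α i), Finset.sum_nonneg fun i _ => house_nonneg _,
    Finset.sum_nonneg fun i _ => house_nonneg _, fun n => ?_⟩
  refine (house_sum_le_sum_house _ _).trans ?_
  rw [Finset.sum_mul]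
  refine Finset.sum_le_sum fun i _ => (house_mul_le _ _).trans ?_
  refine mul_le_mul_of_nonneg_left ((house_pow_le _ _).trans ?_) (house_nonneg _)
  exact pow_le_pow_left₀ (house_nonneg _)
    (Finset.single_le_sum (f := fun i => house (α i)) (fun i _ => house_nonneg _) (Finset.mem_univ i)) n

lemma eventually_lt_fact (q D : ℝ) : ∃ m0 : ℕ, ∀ m, m0 ≤ m → q ^ m * D < (m ! : ℝ) := by
  have h := (FloorSemiring.tendsto_pow_div_factorial_atTop q).mul_const D
  rw [zero_mul] at h
  obtain ⟨m0, h0⟩ := Filter.eventually_atTop.1 (h.eventually_lt_const (zero_lt_one))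
  refine ⟨m0, fun m hm => ?_⟩
  have h1 := h0 m hm
  have : (0 : ℝ) < m ! := by exact_mod_cast Nat.factorial_pos m
  rw [div_mul_eq_mul_div, div_lt_one this] at h1
  exact h1

lemma zero_of_dvd_house (m : ℕ) (w : 𝓞 K) (hd : ((m ! : ℕ) : 𝓞 K) ∣ w)
    (hw : house (w : K) < m !) : w = 0 := by
  obtain ⟨z, rfl⟩ := hd
  by_cases hz : z = 0
  · simp [hz]
  exfalso
  have h1 := one_le_house_of_isIntegral (α := (z : K)) z.2 (by simpa using hz)
  have h2 := house_nat_mul (z : K) (m !)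
  have h3 : ((((m ! : ℕ) : 𝓞 K) * z : 𝓞 K) : K) = ((m ! : ℕ) : K) * (z : K) := by simp
  rw [h3, h2] at hw
  have : (0 : ℝ) < m ! := by exact_mod_cast Nat.factorial_pos m
  nlinarith
end Arch

section Combine
variable {K : Type*} [Field K] [NumberField K]
open Polynomial

lemma house_aeval (f : (𝓞 K)[X]) (c : ℝ) (hc : 0 ≤ c) :
    ∃ q : ℝ, 0 ≤ q ∧ ∀ (u : ℕ → 𝓞 K) (C : ℝ), (∀ n, house (u n : K) ≤ C * c ^ n) →
      ∀ n, house ((aeval (seqShift (𝓞 K)) f u n : 𝓞 K) : K) ≤ (q * C) * c ^ n := by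
  refine ⟨∑ i ∈ range (f.natDegree + 1), house (f.coeff i : K) * c ^ i,
    Finset.sum_nonneg fun i _ => mul_nonneg (house_nonneg _) (pow_nonneg hc _), fun u C hu n => ?_⟩
  rw [aeval_shift_apply]
  have e : ((∑ i ∈ range (f.natDegree + 1), f.coeff i * u (n + i) : 𝓞 K) : K) =
      ∑ i ∈ range (f.natDegree + 1), (f.coeff i : K) * (u (n + i) : K) := by
    push_cast; rfl
  rw [e]
  refine (house_sum_le_sum_house _ _).trans ?_
  rw [Finset.sum_mul, Finset.sum_mul]
  refine Finset.sum_le_sum fun i _ => (house_mul_le _ _).trans ?_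
  calc house (f.coeff i : K) * house (u (n + i) : K)
      ≤ house (f.coeff i : K) * (C * c ^ (n + i)) :=
        mul_le_mul_of_nonneg_left (hu _) (house_nonneg _)
    _ = _ := by ring

lemma house_aeval_pow (f : (𝓞 K)[X]) (c : ℝ) (hc : 0 ≤ c) :
    ∃ q : ℝ, 0 ≤ q ∧ ∀ (u : ℕ → 𝓞 K) (C : ℝ), (∀ n, house (u n : K) ≤ C * c ^ n) →
      ∀ m n, house ((aeval (seqShift (𝓞 K)) (f ^ m) u n : 𝓞 K) : K) ≤ (q ^ m * C) * c ^ n := by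
  obtain ⟨q, hq, h⟩ := house_aeval f c hc
  refine ⟨q, hq, fun u C hu m => ?_⟩
  induction m with
  | zero => simpa using hu
  | succ m ih =>
    intro n
    rw [_root_.pow_succ', map_mul, Module.End.mul_apply]
    refine (h _ _ ih n).trans (le_of_eq (by ring))

/-- The key vanishing statement. -/
lemma key_vanish (g : (𝓞 K)[X]) (hg : g.Monic) (hk : 0 < g.natDegree) (x y : ℕ → 𝓞 K)
    (hy : y = x + seqDer (𝓞 K) y) (hx : aeval (seqShift (𝓞 K)) g x = 0)
    (C c : ℝ) (hC : 0 ≤ C) (hc : 1 ≤ c) (hb : ∀ n, house (y n : K) ≤ C * c ^ n) :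
    ∃ m, aeval (seqShift (𝓞 K)) (g ^ m) y = 0 := by
  obtain ⟨q, hq, h⟩ := house_aeval_pow g c (by linarith)
  obtain ⟨m0, hm0⟩ := eventually_lt_fact q (C * c ^ g.natDegree)
  refine ⟨m0, funext fun n => all_zero g hg hk y m0 ?_ n m0 le_rfl⟩
  intro m hm n hn
  refine zero_of_dvd_house m _ (main_dvd g x y hy hx m n) ?_
  refine lt_of_le_of_lt ((h y C hb m n).trans ?_) (hm0 m hm)
  rw [mul_assoc]
  gcongr

end Combine

/-- let `x_n = a₁α₁ⁿ + … + a_kα_kⁿ` be a linear recurrence sequence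
in a number field `K`, with `α₁,…,α_k ∈ 𝓞 K` pairwise distinct and nonzero and
`a₁,…,a_k ∈ K` not all zero.  Then for any `a, b ∈ 𝓞 K`, `b ≠ 0`, there is a
non-Archimedean place `v'` of `K` with `∑_{n≥0} n!·x_n ≠ a/b` in `K_{v'}`. -/
theorem factorial_recurrence_sum_ne_ratio (K : Type*) [Field K] [NumberField K]
    {k : ℕ} (hk : 1 ≤ k)
    (α : Fin k → 𝓞 K) (hα0 : ∀ i, α i ≠ 0) (hinj : Function.Injective α)
    (a : Fin k → K) (ha : ∃ i, a i ≠ 0)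
    (x : ℕ → K) (hx : ∀ n, x n = ∑ i, a i * ((α i : K)) ^ n)
    (A B : 𝓞 K) (hB : B ≠ 0) :
    ∃ v' : HeightOneSpectrum (𝓞 K),
      (∑' n : ℕ, ((n ! : ℕ) : v'.adicCompletion K) *
          algebraMap K (v'.adicCompletion K) (x n)) ≠
        algebraMap K (v'.adicCompletion K) ((A : K) / (B : K)) := by
  by_contra hcon
  push Not at hcon
  obtain ⟨d, hd⟩ := IsLocalization.exist_integer_multiples_of_finite (nonZeroDivisors (𝓞 K)) a
  choose b hb using hd
  have hd0 : ((d : 𝓞 K) : K) ≠ 0 := by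
    have := nonZeroDivisors.ne_zero d.2
    simpa using this
  have hb' : ∀ i, (b i : K) = (d : 𝓞 K) * a i := fun i => by
    have := hb i
    rw [Algebra.smul_def] at this
    exact this
  let X : ℕ → 𝓞 K := fun n => ∑ i, b i * α i ^ n
  have hX : ∀ n, (X n : K) = (d : 𝓞 K) * x n := by
    intro n
    simp only [X, map_sum, map_mul, map_pow, hx, Finset.mul_sum, hb', mul_assoc]
  let Y : K := (d : 𝓞 K) * ((A : K) / (B : K))
  have hsum : ∀ v : HeightOneSpectrum (𝓞 K), (∑' n : ℕ, ((n ! : ℕ) : v.adicCompletion K) *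
      algebraMap K (v.adicCompletion K) (X n : K)) = algebraMap K (v.adicCompletion K) Y := by
    intro v
    simp only [hX, Y, map_mul]
    rw [← hcon v, ← tsum_mul_left]
    congr 1
    funext n
    ring
  have hint : ∀ N : ℕ, ∃ z : 𝓞 K,
      (z : K) = (Y - ∑ n ∈ range N, (n ! : K) * (X n : K)) / (N ! : K) := fun N =>
    HeightOneSpectrum.mem_integers_of_valuation_le_one K _
      fun v => adic_integral v X Y (hsum v) N
  choose y hy using hint
  have hrecK : ∀ n : ℕ, ((n : K) + 1) * (y (n + 1) : K) = (y n : K) - (X n : K) := by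
    intro n
    have h1 : (n ! : K) ≠ 0 := by exact_mod_cast Nat.factorial_ne_zero n
    have h2 : (n : K) + 1 ≠ 0 := by exact_mod_cast Nat.succ_ne_zero n
    rw [hy, hy, sum_range_succ, Nat.factorial_succ]
    push_cast
    field_simp
    ring
  have hrec : y = X + seqDer (𝓞 K) y := by
    funext n
    apply RingOfIntegers.coe_injective
    have := hrecK n
    simp only [Pi.add_apply, seqDer_apply, map_add, map_mul, map_natCast, map_one]
    rw [this]; ring
  let g : Polynomial (𝓞 K) := ∏ i, (Polynomial.X - Polynomial.C (α i))
  have hgm : g.Monic := Polynomial.monic_prod_X_sub_C _ _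
  have hgd : g.natDegree = k := by
    simp [g]
  have hgX : Polynomial.aeval (seqShift (𝓞 K)) g X = 0 := by
    have hXs : X = ∑ i, b i • (fun n => α i ^ n) := by
      funext n; simp [X, Finset.sum_apply]
    rw [hXs, map_sum]
    refine Finset.sum_eq_zero fun i _ => ?_
    rw [map_smul]
    have : g = (∏ j ∈ univ.erase i, (Polynomial.X - Polynomial.C (α j))) *
        (Polynomial.X - Polynomial.C (α i)) := by
      rw [Finset.prod_erase_mul _ _ (Finset.mem_univ i)]
    rw [this, kill_mul, smul_zero]
    funext n
    simp [seqShift_apply, _root_.pow_succ']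
  obtain ⟨C, c, hC, hc, hxb⟩ := house_bound_x (fun i => (α i : K)) (fun i => (b i : K))
  have hxb' : ∀ n, house (X n : K) ≤ C * c ^ n := by
    intro n
    have := hxb n
    simpa only [X, map_sum, map_mul, map_pow] using this
  obtain ⟨C', c', hC', hc', hyb⟩ := house_bound_y (fun n => (X n : K)) (fun n => (y n : K))
    hrecK C c hC hc hxb'
  obtain ⟨m, hm⟩ := key_vanish g hgm (by omega) X y hrec hgX C' c' hC' hc' hyb
  let φ' := algebraMap (𝓞 K) K
  have hgXK : Polynomial.aeval (seqShift K) (g.map φ') (fun n => φ' (X n)) = 0 := by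
    funext n; rw [aeval_shift_map φ' g hgm, hgX]; simp
  have hmK : Polynomial.aeval (seqShift K) ((g.map φ') ^ m) (fun n => φ' (y n)) = 0 := by
    funext n
    rw [← Polynomial.map_pow, aeval_shift_map φ' _ (hgm.pow m), hm]; simp
  have hrecK' : (fun n => φ' (y n)) = (fun n => φ' (X n)) + seqDer K (fun n => φ' (y n)) := by
    funext n
    have := hrecK n
    simp only [Pi.add_apply, seqDer_apply]
    rw [this]; ring
  have hαinj : Function.Injective (fun i => (α i : K)) :=
    RingOfIntegers.coe_injective.comp hinj
  have hgK : g.map φ' = ∏ i, (Polynomial.X - Polynomial.C (α i : K)) := by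
    simp [g, Polynomial.map_prod, φ']
  have hcop : IsCoprime (g.map φ') (Polynomial.X ^ 2 * Polynomial.derivative (g.map φ')) := by
    refine IsCoprime.mul_right (IsCoprime.pow_right ?_) ?_
    · rw [hgK]
      refine IsCoprime.prod_left fun i _ => ?_
      have := Polynomial.isCoprime_X_sub_C_of_isUnit_sub (a := (α i : K)) (b := 0)
        (by simpa using hα0 i)
      simpa using this
    · have := (Polynomial.separable_prod_X_sub_C_iff (f := fun i => (α i : K))).2 hαinj
      rw [← hgK] at this
      exact this
  have hy0 := endgame (g.map φ') hcop _ _ hrecK' hgXK m hmK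
  have hX0 : ∀ n, (X n : K) = 0 := by
    intro n
    have h1 := congrFun hy0
    have := hrecK n
    have e1 : (y (n + 1) : K) = 0 := h1 (n + 1)
    have e2 : (y n : K) = 0 := h1 n
    rw [e1, e2] at this
    simpa using this.symm
  have hzero : a = 0 := by
    refine Matrix.eq_zero_of_forall_pow_sum_mul_pow_eq_zero hαinj fun j => ?_
    have := hX0 j
    rw [hX, hx] at this
    exact (mul_eq_zero.1 this).resolve_left hd0
  obtain ⟨i, hi⟩ := ha
  exact hi (by rw [hzero]; rfl)
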